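/- arXiv:1810.04737 — 4 statements merged into one kernel-verified Lean document; each statement's English description precedes it below -/
import Mathlib

section
/- The six quadratic polynomials D₁, D₂, D₃, P₁₂, P₁₃, P₂₃, viewed as elements of the polynomial ring ℂ[a₁, b₁, c₁, d₁, a₂, b₂, c₂, d₂, a₃, b₃, c₃, d₃] in the twelve matrix entries, are algebraically independent over ℂ; in particular the ℂ-subalgebra they generate is a polynomial ring in six variables. (Ingredient of Proposition 2.8: M^{Θ-ss}_{(2,2)} ≅ ℙ⁵.) -/
open Matrix MvPolynomial

noncomputable section

/-- The polynomial ring `ℂ[a₁,b₁,c₁,d₁,a₂,b₂,c₂,d₂,a₃,b₃,c₃,d₃]` in the twelve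
entries of a triple of 2×2 matrices: variables are indexed by
`(i, (r, c))` with `i ∈ Fin 3` the index of the matrix and `(r, c)` the entry. -/
abbrev PolyRing : Type := MvPolynomial (Fin 3 × Fin 2 × Fin 2) ℂ

/-- The `i`-th generic 2×2 matrix, whose entries are the corresponding variables. -/
def genMat (i : Fin 3) : Matrix (Fin 2) (Fin 2) PolyRing :=
  fun r c => MvPolynomial.X (i, r, c)

/-- The six quadratic polynomials `D₁, D₂, D₃, P₁₂, P₁₃, P₂₃`. -/
def sixPolys : Fin 6 → PolyRing :=
  ![(genMat 0).det, (genMat 1).det, (genMat 2).det,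
    (genMat 0 + genMat 1).det - (genMat 0).det - (genMat 1).det,
    (genMat 0 + genMat 2).det - (genMat 0).det - (genMat 2).det,
    (genMat 1 + genMat 2).det - (genMat 1).det - (genMat 2).det]

/-!
The matrices `[[1, 0], [0, t₀]]`, `[[0, 1], [-t₁, t₃]]`, `[[x, 1], [x * w - t₂, w]]` with
`w = t₄ - t₀ * x` have `D₁ = t₀`, `D₂ = t₁`, `D₃ = t₂`, `P₁₂ = t₃`, `P₁₃ = t₄`. The first five
forms are thus free parameters, while `P₂₃ = t₀ * x ^ 2 + (t₃ - t₄) * x + (t₁ + t₂)` still varies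
with `x`: its leading coefficient in `x` is the regular element `t₀`, so it is transcendental over
`R[t₀, …, t₄]`. A relation among the six generic forms would specialize to one among these values.
-/

section Transcendental

variable {R A B : Type*} [CommRing R] [CommRing A] [CommRing B]

theorem transcendental_quadratic {a b c : A} (ha : a ∈ nonZeroDivisors A) :
    Transcendental A
      (Polynomial.C a * Polynomial.X ^ 2 + Polynomial.C b * Polynomial.X + Polynomial.C c) := by
  rcases subsingleton_or_nontrivial A with _ | _
  · exact is_transcendental_of_subsingleton A _
  have ha₀ : a ≠ 0 := nonZeroDivisors.ne_zero ha
  apply Polynomial.transcendental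
  · rw [Polynomial.natDegree_quadratic ha₀]
    exact two_ne_zero
  · rwa [Polynomial.leadingCoeff_quadratic ha₀]

theorem algebraicIndependent_snoc [Algebra R A] [Algebra A B] [Algebra R B] [IsScalarTower R A B]
    {n : ℕ} {x : Fin n → A} {b : B} (hx : AlgebraicIndependent R x) (hb : Transcendental A b) :
    AlgebraicIndependent R (Fin.snoc (algebraMap A B ∘ x) b : Fin (n + 1) → B) := by
  have hb' : AlgebraicIndependent A ![b] := algebraicIndependent_iff_transcendental.mpr hb
  let e : Fin 1 ⊕ Fin n ≃ Fin (n + 1) := (Equiv.sumComm _ _).trans finSumFinEquiv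
  refine (algebraicIndependent_equiv' e ?_).mp (hx.sumElim_comp hb')
  ext (i | i) <;> simp [e, Fin.snoc]

end Transcendental

section DetForms

variable {A B : Type*} [CommRing A] [CommRing B]

theorem polar_det_fin_two (M N : Matrix (Fin 2) (Fin 2) A) :
    QuadraticMap.polar det M N =
      M 0 0 * N 1 1 + N 0 0 * M 1 1 - M 0 1 * N 1 0 - N 0 1 * M 1 0 := by
  simp only [QuadraticMap.polar, det_fin_two, Matrix.add_apply]
  ring

/-- The values `D₁, D₂, D₃, P₁₂, P₁₃, P₂₃` at a triple of `2 × 2` matrices over any commutative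
ring; `Pᵢⱼ` is the polarization of the quadratic form `det`. -/
def detForms (Y : Fin 3 → Matrix (Fin 2) (Fin 2) A) : Fin 6 → A :=
  ![(Y 0).det, (Y 1).det, (Y 2).det,
    QuadraticMap.polar det (Y 0) (Y 1), QuadraticMap.polar det (Y 0) (Y 2),
    QuadraticMap.polar det (Y 1) (Y 2)]

theorem detForms_map (f : A →+* B) (Y : Fin 3 → Matrix (Fin 2) (Fin 2) A) :
    detForms (fun i ↦ (Y i).map f) = f ∘ detForms Y := by
  ext i
  fin_cases i <;> simp [detForms, polar_det_fin_two, det_fin_two]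

/-- A triple of matrices whose first five `detForms` are `t`, in a one-parameter family along
which the sixth is a quadratic function of the parameter `x`. -/
def prescribedTriple (t : Fin 5 → A) (x : A) : Fin 3 → Matrix (Fin 2) (Fin 2) A :=
  ![!![1, 0; 0, t 0],
    !![0, 1; -t 1, t 3],
    !![x, 1; x * (t 4 - t 0 * x) - t 2, t 4 - t 0 * x]]

theorem detForms_prescribedTriple (t : Fin 5 → A) (x : A) :
    detForms (prescribedTriple t x) =
      Fin.snoc t (t 0 * x ^ 2 + (t 3 - t 4) * x + (t 1 + t 2)) := by
  have snoc_eq (q : A) : Fin.snoc t q = ![t 0, t 1, t 2, t 3, t 4, q] := by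
    ext i
    fin_cases i <;> rfl
  have hP₂₃ : QuadraticMap.polar det (prescribedTriple t x 1) (prescribedTriple t x 2) =
      t 0 * x ^ 2 + (t 3 - t 4) * x + (t 1 + t 2) :=
    calc
      _ = 0 * (t 4 - t 0 * x) + x * t 3 - 1 * (x * (t 4 - t 0 * x) - t 2) - 1 * -t 1 :=
        polar_det_fin_two _ _
      _ = _ := by ring
  rw [snoc_eq, detForms, hP₂₃]
  simp [prescribedTriple, polar_det_fin_two, mul_comm]

end DetForms

section GenericTriple

variable (R : Type*) [CommRing R]

/-- The triple of generic `2 × 2` matrices over `R`, with the indexing of variables of `genMat`. -/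
def genericTriple (i : Fin 3) :
    Matrix (Fin 2) (Fin 2) (MvPolynomial (Fin 3 × Fin 2 × Fin 2) R) :=
  of fun r c ↦ X (i, r, c)

variable {R} in
theorem algebraicIndependent_detForms_genericTriple_of_specialization {A : Type*} [CommRing A]
    [Algebra R A] {Y : Fin 3 → Matrix (Fin 2) (Fin 2) A}
    (hY : AlgebraicIndependent R (detForms Y)) :
    AlgebraicIndependent R (detForms (genericTriple R)) := by
  let specialization : MvPolynomial (Fin 3 × Fin 2 × Fin 2) R →ₐ[R] A :=
    aeval fun k ↦ Y k.1 k.2.1 k.2.2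
  have map_generic : (fun i ↦ (genericTriple R i).map specialization.toRingHom) = Y := by
    ext i r c
    simp [specialization, genericTriple]
  apply AlgebraicIndependent.of_comp specialization
  rwa [← map_generic, detForms_map] at hY

theorem sixPolys_algebraicIndependent_general :
    AlgebraicIndependent R (detForms (genericTriple R)) := by
  let t : Fin 5 → MvPolynomial (Fin 5) R := X
  have ht : AlgebraicIndependent R t := algebraicIndependent_X _ _
  have ht₀ : t 0 ∈ nonZeroDivisors (MvPolynomial (Fin 5) R) := isRegular_X.mem_nonZeroDivisors
  have hP₂₃ := transcendental_quadratic (b := t 3 - t 4) (c := t 1 + t 2) ht₀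
  apply algebraicIndependent_detForms_genericTriple_of_specialization
    (Y := prescribedTriple (Polynomial.C ∘ t) Polynomial.X)
  rw [detForms_prescribedTriple]
  simpa only [Polynomial.C_sub, Polynomial.C_add, Function.comp_apply, Polynomial.algebraMap_eq]
    using algebraicIndependent_snoc ht hP₂₃

end GenericTriple

/-- The six quadratic polynomials `D₁, D₂, D₃, P₁₂, P₁₃, P₂₃` in the twelve matrix
entries are algebraically independent over `ℂ`; in particular the `ℂ`-subalgebra
they generate is a polynomial ring in six variables. -/
theorem sixPolys_algebraicIndependent :
    AlgebraicIndependent ℂ sixPolys := by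
  exact sixPolys_algebraicIndependent_general ℂ
end
end

section
/- Let Y₁, Y₂, Y₃ be 2×2 complex matrices such that det(λ₁Y₁ + λ₂Y₂ + λ₃Y₃) = 0 for every (λ₁, λ₂, λ₃) ∈ ℂ³. Then either there exists a nonzero vector v ∈ ℂ² with Y₁v = Y₂v = Y₃v = 0, or there exists a one-dimensional subspace L ⊆ ℂ² containing range Y₁ + range Y₂ + range Y₃. (The linear-algebra fact underlying the identification of the semistable locus in Proposition 2.8: a net of everywhere-singular 2×2 matrices has a common kernel vector or a common image line.) -/
open Matrix

noncomputable section

/-!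
If `f`, `g` and `f + g` have rank one and `ker f ≠ ker g`, then evaluating `f + g` at a point of
one kernel outside the other shows that `range (f + g)` meets both `range f` and `range g`, so the
three lines coincide. Thus any two nonzero members of the net share their range or their kernel.
"Same range" and "same kernel" are equivalence relations, and a set covered by two equivalence
relations is a single class for one of them.
-/

section Setoid

variable {α : Type*} {r s : Setoid α}

lemma setoid_eq_top_or_eq_top_of_forall_or (h : ∀ x y, r x y ∨ s x y) : r = ⊤ ∨ s = ⊤ := by
  by_contra! hne
  obtain ⟨x, y, hxy⟩ : ∃ x y, ¬ r x y := by simpa [Setoid.eq_top_iff] using hne.1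
  have s_xy : s x y := (h x y).resolve_left hxy
  have s_x (z : α) : s x z := by
    rcases h x z with r_xz | s_xz
    · have r_zy : ¬ r z y := fun r_zy ↦ hxy (r.trans r_xz r_zy)
      exact s.trans s_xy (s.symm ((h z y).resolve_left r_zy))
    · exact s_xz
  exact hne.2 (Setoid.eq_top_iff.2 fun z w ↦ s.trans (s.symm (s_x z)) (s_x w))

end Setoid

section SimpleRange

variable {R M N : Type*} [Ring R] [AddCommGroup M] [Module R M] [AddCommGroup N] [Module R N]

lemma isCoatom_ker_of_isAtom_range {f : M →ₗ[R] N} (hf : IsAtom (LinearMap.range f)) :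
    IsCoatom (LinearMap.ker f) := by
  have : IsSimpleModule R (LinearMap.range f) := isSimpleModule_iff_isAtom.2 hf
  rw [← LinearMap.ker_rangeRestrict]
  exact LinearMap.isCoatom_ker_of_surjective f.surjective_rangeRestrict

lemma range_eq_range_add_of_not_ker_le_ker {f g : M →ₗ[R] N} (hf : IsAtom (LinearMap.range f))
    (hfg : f + g ≠ 0 → IsAtom (LinearMap.range (f + g)))
    (hker : ¬ LinearMap.ker g ≤ LinearMap.ker f) :
    LinearMap.range f = LinearMap.range (f + g) := by
  obtain ⟨x, hgx, hfx⟩ := SetLike.not_le_iff_exists.1 hker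
  rw [LinearMap.mem_ker] at hgx hfx
  have add_apply : (f + g) x = f x := by simp [hgx]
  have add_ne_zero : f + g ≠ 0 := fun h ↦ hfx (by simp [← add_apply, h])
  by_contra hne
  have hdisj := hf.disjoint_of_ne (hfg add_ne_zero) hne
  exact hfx (Submodule.disjoint_def.1 hdisj _ ⟨x, rfl⟩ ⟨x, add_apply⟩)

lemma range_eq_or_ker_eq_of_isAtom_range_add {f g : M →ₗ[R] N}
    (hf : IsAtom (LinearMap.range f)) (hg : IsAtom (LinearMap.range g))
    (hfg : f + g ≠ 0 → IsAtom (LinearMap.range (f + g))) :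
    LinearMap.range f = LinearMap.range g ∨ LinearMap.ker f = LinearMap.ker g := by
  refine or_iff_not_imp_right.2 fun hne ↦ ?_
  have not_ker_le : ¬ LinearMap.ker g ≤ LinearMap.ker f := fun hle ↦
    hne ((isCoatom_ker_of_isAtom_range hg).le_iff_eq
      (isCoatom_ker_of_isAtom_range hf).ne_top |>.1 hle)
  have not_ker_ge : ¬ LinearMap.ker f ≤ LinearMap.ker g := fun hle ↦
    hne ((isCoatom_ker_of_isAtom_range hf).le_iff_eq
      (isCoatom_ker_of_isAtom_range hg).ne_top |>.1 hle).symm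
  calc LinearMap.range f = LinearMap.range (f + g) :=
        range_eq_range_add_of_not_ker_le_ker hf hfg not_ker_le
    _ = LinearMap.range (g + f) := by rw [add_comm]
    _ = LinearMap.range g :=
        (range_eq_range_add_of_not_ker_le_ker hg (by rwa [add_comm]) not_ker_ge).symm

lemma forall_range_eq_or_forall_ker_eq {ι : Type*} {f : ι → M →ₗ[R] N}
    (hf : ∀ i, IsAtom (LinearMap.range (f i)))
    (hadd : ∀ i j, f i + f j ≠ 0 → IsAtom (LinearMap.range (f i + f j))) :
    (∀ i j, LinearMap.range (f i) = LinearMap.range (f j)) ∨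
      ∀ i j, LinearMap.ker (f i) = LinearMap.ker (f j) := by
  have h := setoid_eq_top_or_eq_top_of_forall_or
    (r := Setoid.ker fun i ↦ LinearMap.range (f i)) (s := Setoid.ker fun i ↦ LinearMap.ker (f i))
    fun i j ↦ range_eq_or_ker_eq_of_isAtom_range_add (hf i) (hf j) (hadd i j)
  exact h.imp Setoid.eq_top_iff.1 Setoid.eq_top_iff.1

end SimpleRange

section RankLeOne

variable {K V W : Type*} [DivisionRing K] [AddCommGroup V] [Module K V] [AddCommGroup W]
  [Module K W]

lemma finrank_range_eq_one_of_rank_le_one {f : V →ₗ[K] W} (hf : f.rank ≤ 1) (hf₀ : f ≠ 0) :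
    Module.finrank K (LinearMap.range f) = 1 := by
  have : Nontrivial (LinearMap.range f) :=
    Submodule.nontrivial_iff_ne_bot.2 (mt LinearMap.range_eq_bot.1 hf₀)
  exact Module.rank_eq_one_iff_finrank_eq_one.1
    (hf.antisymm (Cardinal.one_le_iff_pos.2 rank_pos))

lemma isAtom_range_of_rank_le_one {f : V →ₗ[K] W} (hf : f.rank ≤ 1) (hf₀ : f ≠ 0) :
    IsAtom (LinearMap.range f) :=
  isSimpleModule_iff_isAtom.1 <|
    isSimpleModule_iff_finrank_eq_one.2 (finrank_range_eq_one_of_rank_le_one hf hf₀)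

lemma exists_ne_zero_apply_eq_zero_of_rank_le_one (hV : 1 < Module.rank K V) {f : V →ₗ[K] W}
    (hf : f.rank ≤ 1) : ∃ v ≠ 0, f v = 0 := by
  by_contra! h
  have hinj : Function.Injective f := (injective_iff_map_eq_zero f).2 fun v ↦ not_imp_not.1 (h v)
  have hlift := (LinearEquiv.ofInjective f hinj).lift_rank_eq
  have hle : Cardinal.lift (Module.rank K V) ≤ 1 := hlift.trans_le (Cardinal.lift_le_one_iff.2 hf)
  exact hV.not_ge (Cardinal.lift_le_one_iff.1 hle)

theorem singular_net_common_kernel_or_image_line_general {ι : Type*} (hV : 1 < Module.rank K V)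
    (f : ι → V →ₗ[K] W) (hf : ∀ i, (f i).rank ≤ 1) (hadd : ∀ i j, (f i + f j).rank ≤ 1) :
    (∃ v ≠ 0, ∀ i, f i v = 0) ∨
      ∃ L : Submodule K W, Module.finrank K L = 1 ∧ ⨆ i, LinearMap.range (f i) ≤ L := by
  by_cases hzero : ∀ i, f i = 0
  · have : Nontrivial V := rank_pos_iff_nontrivial.1 (zero_lt_one.trans hV)
    obtain ⟨v, hv⟩ := exists_ne (0 : V)
    exact Or.inl ⟨v, hv, fun i ↦ by simp [hzero i]⟩
  obtain ⟨i₀, hi₀⟩ := not_forall.1 hzero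
  rcases forall_range_eq_or_forall_ker_eq (f := fun i : {i // f i ≠ 0} ↦ f i)
    (fun i ↦ isAtom_range_of_rank_le_one (hf i) i.2)
    (fun i j ↦ isAtom_range_of_rank_le_one (hadd i j)) with hrange | hker
  · refine Or.inr ⟨_, finrank_range_eq_one_of_rank_le_one (hf i₀) hi₀, iSup_le fun i ↦ ?_⟩
    by_cases hi : f i = 0
    · simp [hi]
    · exact (hrange ⟨i, hi⟩ ⟨i₀, hi₀⟩).le
  · obtain ⟨v, hv, hv₀⟩ := exists_ne_zero_apply_eq_zero_of_rank_le_one hV (hf i₀)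
    refine Or.inl ⟨v, hv, fun i ↦ ?_⟩
    by_cases hi : f i = 0
    · simp [hi]
    · exact (hker ⟨i₀, hi₀⟩ ⟨i, hi⟩).le hv₀

end RankLeOne

lemma rank_le_of_det_eq_zero {K V : Type*} [Field K] [AddCommGroup V] [Module K V] {n : ℕ}
    (hV : Module.finrank K V = n + 1) {f : V →ₗ[K] V} (hf : f.det = 0) : f.rank ≤ n := by
  have : FiniteDimensional K V := Module.finite_of_finrank_eq_succ hV
  have hlt : Module.finrank K (LinearMap.range f) < n + 1 :=
    hV ▸ Submodule.finrank_lt (LinearMap.range_lt_top_of_det_eq_zero hf).ne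
  rw [LinearMap.rank, ← Module.finrank_eq_rank]
  exact_mod_cast Nat.lt_succ_iff.1 hlt

/-- If every linear combination of three 2×2 complex matrices is singular, then
either they have a common nonzero kernel vector, or there is a one-dimensional
subspace of `ℂ²` containing `range Y₁ + range Y₂ + range Y₃`. -/
theorem singular_net_common_kernel_or_image_line
    (Y₁ Y₂ Y₃ : Matrix (Fin 2) (Fin 2) ℂ)
    (h : ∀ l₁ l₂ l₃ : ℂ, (l₁ • Y₁ + l₂ • Y₂ + l₃ • Y₃).det = 0) :
    (∃ v : Fin 2 → ℂ, v ≠ 0 ∧ Y₁.mulVec v = 0 ∧ Y₂.mulVec v = 0 ∧ Y₃.mulVec v = 0) ∨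
    (∃ L : Submodule ℂ (Fin 2 → ℂ), Module.finrank ℂ L = 1 ∧
      LinearMap.range Y₁.mulVecLin ⊔ LinearMap.range Y₂.mulVecLin ⊔
        LinearMap.range Y₃.mulVecLin ≤ L) := by
  let f : Fin 3 → (Fin 2 → ℂ) →ₗ[ℂ] Fin 2 → ℂ := ![Y₁.mulVecLin, Y₂.mulVecLin, Y₃.mulVecLin]
  have hrank : ∀ g ∈ Submodule.span ℂ (Set.range f), g.rank ≤ 1 := by
    intro g hg
    obtain ⟨l, rfl⟩ := (Submodule.mem_span_range_iff_exists_fun ℂ).1 hg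
    have hdet : (∑ i, l i • f i).det = 0 := by
      simpa [f, Fin.sum_univ_three, ← toLin'_apply', ← map_smul, ← map_add] using
        h (l 0) (l 1) (l 2)
    exact_mod_cast rank_le_of_det_eq_zero (n := 1) (by simp) hdet
  have hmem (i : Fin 3) : f i ∈ Submodule.span ℂ (Set.range f) := Submodule.subset_span ⟨i, rfl⟩
  have hpair := singular_net_common_kernel_or_image_line_general (by simp) f
    (fun i ↦ hrank _ (hmem i)) (fun i j ↦ hrank _ (add_mem (hmem i) (hmem j)))
  simpa [f, Fin.forall_fin_succ] using hpair
end
end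

section
/- A representation (Y₁, Y₂, Y₃) of the Kronecker quiver Q₃ with dimension vector (2,2) is Θ-semistable for Θ = (−1, 1) if and only if there exists (λ₁, λ₂, λ₃) ∈ ℂ³ with det(λ₁Y₁ + λ₂Y₂ + λ₃Y₃) ≠ 0. (The concrete criterion for GIT-semistability underlying Proposition 2.8: a point of the representation space is semistable exactly when some Θ-semi-invariant of positive weight does not vanish on it.) -/
open Matrix

noncomputable section

/-- The underlying vector space `ℂ²`. -/
abbrev V2 : Type := Fin 2 → ℂ

/-- 2×2 complex matrices. -/
abbrev M2 : Type := Matrix (Fin 2) (Fin 2) ℂ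

/-- A representation of the Kronecker quiver `Q₃` with dimension vector `(2,2)`
is a triple of 2×2 complex matrices, acting on `ℂ²`. A pair of subspaces
`(W₁, W₂)` is a subrepresentation if `Yᵢ(W₁) ⊆ W₂` for all `i`. The
representation is `Θ`-semistable for `Θ = (-1,1)` if `-dim W₁ + dim W₂ ≥ 0`
for every subrepresentation `(W₁, W₂)`. -/
def ThetaSemistable (Y : Fin 3 → M2) : Prop :=
  ∀ W₁ W₂ : Submodule ℂ V2, (∀ i, W₁.map (Y i).mulVecLin ≤ W₂) →
    (0 : ℤ) ≤ -(Module.finrank ℂ W₁ : ℤ) + (Module.finrank ℂ W₂ : ℤ)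

/-!
If an injective `f` is a linear combination of the `Y i`, then `f` embeds `W₁` into `W₂` for every
subrepresentation `(W₁, W₂)`. Conversely, suppose that the span `S` of the `Y i` contains no
injective map; in dimension two, all its elements then have rank at most one. If `S = 0`, then
`(⊤, ⊥)` is destabilizing. Otherwise fix a nonzero `f ∈ S`: adding `f` to any `g ∈ S` would produce
rank two unless `range g ≤ range f` or `ker f ≤ ker g`. Each of these alternatives cuts out a
subspace of `S`, and a vector space is not the union of two proper subspaces, so one of them holds
on all of `S`: either `(⊤, range f)` or `(ker f, ⊥)` is a destabilizing subrepresentation.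
-/

open Module Submodule Function

section Rank

variable {K V W : Type*} [DivisionRing K] [AddCommGroup V] [Module K V] [AddCommGroup W]
  [Module K W]

lemma range_le_span_singleton_of_rank_le_one {f : V →ₗ[K] W} (hf : f.rank ≤ 1) {u : V}
    (hu : f u ≠ 0) : f.range ≤ K ∙ f u := by
  obtain ⟨w, hw⟩ := (rank_submodule_le_one_iff' f.range).1 hf
  obtain ⟨c, hc⟩ := mem_span_singleton.1 (hw (f.mem_range_self u))
  have hc0 : c ≠ 0 := left_ne_zero_of_smul (hc ▸ hu)
  rwa [← hc, span_singleton_smul_eq hc0.isUnit]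

lemma range_le_range_or_ker_le_ker {f g : V →ₗ[K] W} (hf : f ≠ 0) (hg : g.rank ≤ 1)
    (hfg : (f + g).rank ≤ 1) : g.range ≤ f.range ∨ f.ker ≤ g.ker := by
  refine or_iff_not_imp_right.2 fun hker ↦ ?_
  obtain ⟨u, hfu, hgu⟩ := SetLike.not_le_iff_exists.1 hker
  rw [LinearMap.mem_ker] at hfu hgu
  have hu : (f + g) u = g u := by rw [LinearMap.add_apply, hfu, zero_add]
  have hg_range : g.range ≤ K ∙ g u := range_le_span_singleton_of_rank_le_one hg hgu
  have hfg_range : (f + g).range ≤ K ∙ g u :=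
    hu ▸ range_le_span_singleton_of_rank_le_one hfg (hu ▸ hgu)
  obtain ⟨x, hx⟩ := DFunLike.ne_iff.1 hf
  have hfx : f x ∈ K ∙ g u := by
    simpa using sub_mem (hfg_range ((f + g).mem_range_self x)) (hg_range (g.mem_range_self x))
  obtain ⟨c, hc⟩ := mem_span_singleton.1 hfx
  have hc0 : c ≠ 0 := left_ne_zero_of_smul (hc ▸ hx)
  have hgu_mem : g u ∈ f.range := (f.range.smul_mem_iff hc0).1 (hc ▸ f.mem_range_self x)
  exact hg_range.trans ((span_singleton_le_iff_mem _ _).2 hgu_mem)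

lemma finrank_ker_pos_of_not_injective [FiniteDimensional K V] {f : V →ₗ[K] W}
    (hf : ¬ Injective f) : 0 < finrank K f.ker :=
  one_le_finrank_iff.2 <| mt LinearMap.ker_eq_bot.1 hf

lemma rank_le_of_not_injective [FiniteDimensional K V] {n : ℕ} (hV : finrank K V ≤ n + 1)
    {f : V →ₗ[K] W} (hf : ¬ Injective f) : f.rank ≤ n := by
  have hker := finrank_ker_pos_of_not_injective hf
  have hrange : finrank K f.range ≤ n := by
    have := f.finrank_range_add_finrank_ker
    omega
  rw [LinearMap.rank, ← finrank_eq_rank]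
  exact_mod_cast hrange

end Rank

lemma map_le_of_mem_span_range {R M N ι : Type*} [CommSemiring R] [AddCommMonoid M]
    [AddCommMonoid N] [Module R M] [Module R N] {Y : ι → M →ₗ[R] N} {P : Submodule R M}
    {Q : Submodule R N} (hY : ∀ i, P.map (Y i) ≤ Q) {f : M →ₗ[R] N}
    (hf : f ∈ span R (Set.range Y)) : P.map f ≤ Q := by
  have hspan : span R (Set.range Y) ≤ compatibleMaps P Q :=
    span_le.2 <| Set.range_subset_iff.2 fun i ↦ map_le_iff_le_comap.1 (hY i)
  exact map_le_iff_le_comap.2 (hspan hf)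

section Semistability

variable {K V W ι : Type*} [Field K] [AddCommGroup V] [Module K V] [AddCommGroup W] [Module K W]

theorem forall_range_le_or_forall_ker_le_of_rank_le_one {S : Submodule K (V →ₗ[K] W)}
    (hS : ∀ g ∈ S, g.rank ≤ 1) {f : V →ₗ[K] W} (hfS : f ∈ S) (hf : f ≠ 0) :
    (∀ g ∈ S, g.range ≤ f.range) ∨ ∀ g ∈ S, f.ker ≤ g.ker := by
  let rangeLE : Submodule K (V →ₗ[K] W) := compatibleMaps ⊤ f.range
  let kerLE : Submodule K (V →ₗ[K] W) := compatibleMaps f.ker ⊥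
  have mem_rangeLE (g : V →ₗ[K] W) : g ∈ rangeLE ↔ g.range ≤ f.range := by
    rw [LinearMap.range_eq_map g, map_le_iff_le_comap]
    rfl
  have mem_kerLE (g : V →ₗ[K] W) : g ∈ kerLE ↔ f.ker ≤ g.ker := Iff.rfl
  have hunion : (S : Set (V →ₗ[K] W)) ⊆ rangeLE ∪ kerLE := by
    intro g hg
    rw [Set.mem_union, SetLike.mem_coe, SetLike.mem_coe, mem_rangeLE, mem_kerLE]
    exact range_le_range_or_ker_le_ker hf (hS g hg) (hS _ (S.add_mem hfS hg))
  exact (AddSubgroupClass.subset_union.1 hunion).imp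
    (fun h g hg ↦ (mem_rangeLE g).1 (h hg)) (fun h g hg ↦ (mem_kerLE g).1 (h hg))

/-- Semistability with respect to `Θ = (-1, 1)` of a representation `Y` of the Kronecker quiver with
arrows indexed by `ι`: every subrepresentation `(P, Q)` has nonnegative weight
`-dim P + dim Q`, written without subtraction. This is King's notion when `dim V = dim W`; other
dimension vectors and infinite-dimensional spaces (where `finrank` is `0`) are not excluded. -/
def KroneckerSemistable (Y : ι → V →ₗ[K] W) : Prop :=
  ∀ (P : Submodule K V) (Q : Submodule K W), (∀ i, P.map (Y i) ≤ Q) → finrank K P ≤ finrank K Q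

namespace KroneckerSemistable

variable {Y : ι → V →ₗ[K] W}

lemma of_injective_mem_span [FiniteDimensional K W] {f : V →ₗ[K] W}
    (hf : f ∈ span K (Set.range Y)) (hinj : Injective f) : KroneckerSemistable Y := fun P Q hY ↦
  calc finrank K P = finrank K (P.map f) := (P.equivMapOfInjective f hinj).finrank_eq
    _ ≤ finrank K Q := finrank_mono (map_le_of_mem_span_range hY hf)

lemma exists_ne_zero [Nontrivial V] [FiniteDimensional K V] (hY : KroneckerSemistable Y) :
    ∃ i, Y i ≠ 0 := by
  by_contra! hzero
  have hle : finrank K (⊤ : Submodule K V) ≤ finrank K (⊥ : Submodule K W) :=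
    hY ⊤ ⊥ fun i ↦ by rw [hzero i, Submodule.map_zero]
  rw [finrank_top, finrank_bot] at hle
  exact finrank_pos.not_ge hle

theorem exists_injective_mem_span [FiniteDimensional K V] (hV : finrank K V ≤ 2)
    (hY : KroneckerSemistable Y) : ∃ f ∈ span K (Set.range Y), Injective f := by
  by_contra! hS
  have : Nontrivial V := not_subsingleton_iff_nontrivial.1 fun _ ↦
    hS 0 (zero_mem _) (injective_of_subsingleton _)
  obtain ⟨i, hi⟩ := hY.exists_ne_zero
  have hmem (j : ι) : Y j ∈ span K (Set.range Y) := subset_span (Set.mem_range_self j)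
  have hker : 0 < finrank K (Y i).ker := finrank_ker_pos_of_not_injective (hS _ (hmem i))
  have hrank : ∀ g ∈ span K (Set.range Y), g.rank ≤ 1 := fun g hg ↦ by
    exact_mod_cast rank_le_of_not_injective hV (hS g hg)
  rcases forall_range_le_or_forall_ker_le_of_rank_le_one hrank (hmem i) hi with hrange | hkers
  · have hle := hY ⊤ (Y i).range fun j ↦ (LinearMap.range_eq_map (Y j)) ▸ hrange _ (hmem j)
    have := (Y i).finrank_range_add_finrank_ker
    rw [finrank_top] at hle
    omega
  · have hle := hY (Y i).ker ⊥ fun j ↦ map_le_iff_le_comap.2 (hkers _ (hmem j))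
    rw [finrank_bot] at hle
    omega

end KroneckerSemistable

theorem kroneckerSemistable_iff_exists_injective [FiniteDimensional K V] [FiniteDimensional K W]
    (hV : finrank K V ≤ 2) {Y : ι → V →ₗ[K] W} :
    KroneckerSemistable Y ↔ ∃ f ∈ span K (Set.range Y), Injective f :=
  ⟨fun hY ↦ hY.exists_injective_mem_span hV, fun ⟨_, hf, hinj⟩ ↦ .of_injective_mem_span hf hinj⟩

end Semistability

lemma mulVecLin_injective_iff_det_ne_zero {K n : Type*} [Field K] [Fintype n] [DecidableEq n]
    {A : Matrix n n K} : Injective A.mulVecLin ↔ A.det ≠ 0 := by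
  rw [← isUnit_iff_ne_zero, ← isUnit_iff_isUnit_det, ← mulVec_injective_iff_isUnit]
  rfl

lemma span_range_mulVecLin {R m n ι : Type*} [CommSemiring R] [Fintype n] [DecidableEq n]
    (Y : ι → Matrix m n R) :
    span R (Set.range fun i ↦ (Y i).mulVecLin) =
      (span R (Set.range Y)).map (toLin' : Matrix m n R ≃ₗ[R] _).toLinearMap := by
  rw [map_span, ← Set.range_comp]
  rfl

lemma exists_mem_span_range_fin_three {R M : Type*} [Semiring R] [AddCommMonoid M] [Module R M]
    (v : Fin 3 → M) (p : M → Prop) :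
    (∃ x ∈ span R (Set.range v), p x) ↔ ∃ a b c : R, p (a • v 0 + b • v 1 + c • v 2) := by
  simp [mem_span_range_iff_exists_fun, Fin.exists_fin_succ_pi, Fin.sum_univ_three]

lemma thetaSemistable_iff_kroneckerSemistable (Y : Fin 3 → M2) :
    ThetaSemistable Y ↔ KroneckerSemistable fun i ↦ (Y i).mulVecLin :=
  forall₃_congr fun _ _ _ ↦ by rw [le_neg_add_iff_le, Nat.cast_le]

theorem thetaSemistable_iff_det_ne_zero_general {K n ι : Type*} [Field K] [Fintype n]
    [DecidableEq n] (hn : Fintype.card n ≤ 2) (Y : ι → Matrix n n K) :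
    KroneckerSemistable (fun i ↦ (Y i).mulVecLin) ↔ ∃ A ∈ span K (Set.range Y), A.det ≠ 0 := by
  rw [kroneckerSemistable_iff_exists_injective (by rwa [finrank_fintype_fun_eq_card]),
    span_range_mulVecLin]
  simp_rw [mem_map, exists_exists_and_eq_and, ← mulVecLin_injective_iff_det_ne_zero]
  rfl

/-- A representation `(Y₁, Y₂, Y₃)` of `Q₃` with dimension vector `(2,2)` is
`Θ`-semistable for `Θ = (-1,1)` if and only if some linear combination
`λ₁Y₁ + λ₂Y₂ + λ₃Y₃` has nonzero determinant. -/
theorem thetaSemistable_iff_det_ne_zero (Y : Fin 3 → M2) :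
    ThetaSemistable Y ↔
      ∃ l₁ l₂ l₃ : ℂ, (l₁ • Y 0 + l₂ • Y 1 + l₃ • Y 2).det ≠ 0 :=
  (thetaSemistable_iff_kroneckerSemistable Y).trans <|
    (thetaSemistable_iff_det_ne_zero_general (by simp) Y).trans (exists_mem_span_range_fin_three ..)
end
end

section
/- For every (q₁, q₂, q₃, q₄, q₅, q₆) ∈ ℂ⁶ there exists a triple (Y₁, Y₂, Y₃) of 2×2 complex matrices with D₁(Y) = q₁, D₂(Y) = q₂, D₃(Y) = q₃, P₁₂(Y) = q₄, P₁₃(Y) = q₅ and P₂₃(Y) = q₆; that is, the map (M₂(ℂ))³ → ℂ⁶ given by the six semi-invariants is surjective. (The surjectivity onto ℙ⁵ of the quotient map of the semistable locus in Proposition 2.8.) -/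
open Matrix

noncomputable section

/-!
A triple `Y` has the six prescribed invariants exactly when `det (∑ xᵢ Yᵢ)` is the ternary
quadratic form `q₁x₁² + q₂x₂² + q₃x₃² + q₄x₁x₂ + q₅x₁x₃ + q₆x₂x₃`. A ternary form with a nontrivial
zero, taken as the first vector of a basis, has no square of the first coordinate `x`, so it can be
written `y · ℓ + z · m` with linear forms `ℓ` and `m`; this is the determinant of `!![y, -z; m, ℓ]`.
Over an algebraically closed field a nontrivial zero exists already on any plane.
-/

open Module QuadraticMap

section CommRing

variable {R V : Type*} [CommRing R] [AddCommGroup V] [Module R V]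

/-- The determinant of `2 × 2` matrices as a quadratic form. Its polar form is
`A, B ↦ det (A + B) - det A - det B`, so isometries into it carry the semi-invariants. -/
def detForm (R : Type*) [CommRing R] : QuadraticForm R (Matrix (Fin 2) (Fin 2) R) :=
  linMulLin (entryLinearMap R R 0 0) (entryLinearMap R R 1 1) -
    linMulLin (entryLinearMap R R 0 1) (entryLinearMap R R 1 0)

theorem detForm_apply (A : Matrix (Fin 2) (Fin 2) R) : detForm R A = A.det :=
  (det_fin_two A).symm

theorem quadraticMap_smul_add_smul_add_smul {N : Type*} [AddCommGroup N] [Module R N]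
    (Q : QuadraticMap R V N) (x y z : R) (u v w : V) :
    Q (x • u + y • v + z • w) =
      (x * x) • Q u + (y * y) • Q v + (z * z) • Q w +
        (x * y) • polar Q u v + (x * z) • polar Q u w + (y * z) • polar Q v w := by
  simp only [QuadraticMap.map_add Q, QuadraticMap.map_smul, polar_add_left, polar_smul_left,
    polar_smul_right]
  module

theorem nonempty_isometry_detForm_of_basis (Q : QuadraticForm R V) (b : Basis (Fin 3) R V)
    (hb : Q (b 0) = 0) : Nonempty (Q →qᵢ detForm R) := by
  let A : Fin 3 → Matrix (Fin 2) (Fin 2) R :=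
    ![!![0, 0; polar Q (b 0) (b 2), polar Q (b 0) (b 1)],
      !![1, 0; 0, Q (b 1)],
      !![0, -1; Q (b 2), polar Q (b 1) (b 2)]]
  suffices hA : ∀ v, detForm R (b.constr R A v) = Q v from ⟨⟨b.constr R A, hA⟩⟩
  intro v
  obtain ⟨x, y, z, rfl⟩ : ∃ x y z : R, v = x • b 0 + y • b 1 + z • b 2 :=
    ⟨b.repr v 0, b.repr v 1, b.repr v 2, by
      simpa only [Fin.sum_univ_three] using (b.sum_repr v).symm⟩
  have hpencil : b.constr R A (x • b 0 + y • b 1 + z • b 2) =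
      !![y, -z; x * polar Q (b 0) (b 2) + z * Q (b 2),
        x * polar Q (b 0) (b 1) + y * Q (b 1) + z * polar Q (b 1) (b 2)] := by
    simp only [map_add, map_smul, Basis.constr_basis]
    simp [A]
  rw [hpencil, detForm_apply, det_fin_two_of, quadraticMap_smul_add_smul_add_smul, hb]
  simp only [smul_eq_mul]
  ring

end CommRing

section Field

variable {K V : Type*} [Field K] [AddCommGroup V] [Module K V] {Q : QuadraticForm K V}

theorem nonempty_isometry_detForm (hV : finrank K V = 3) (hQ : ¬Q.Anisotropic) :
    Nonempty (Q →qᵢ detForm K) := by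
  obtain ⟨u, hu, hQu⟩ := (not_anisotropic_iff_exists Q).mp hQ
  obtain ⟨v, huv⟩ := exists_linearIndependent_pair_of_one_lt_finrank (R := K) (by lia) hu
  obtain ⟨w, huvw⟩ := exists_linearIndependent_snoc_of_lt_finrank huv (by lia)
  let b := basisOfLinearIndependentOfCardEqFinrank huvw (by simp [hV])
  exact nonempty_isometry_detForm_of_basis Q b (by simpa [b, Fin.snoc] using hQu)

variable [IsAlgClosed K]

open Polynomial in
theorem exists_quadratic_eq_zero_of_isAlgClosed {a : K} (ha : a ≠ 0) (b c : K) :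
    ∃ t, a * t ^ 2 + b * t + c = 0 := by
  have hdeg : (C a * X ^ 2 + C b * X + C c).degree ≠ 0 := by simp [degree_quadratic ha]
  simpa using IsAlgClosed.exists_root _ hdeg

theorem not_anisotropic_of_one_lt_finrank (hV : 1 < finrank K V) : ¬Q.Anisotropic := by
  intro hQ
  have : Nontrivial V := nontrivial_of_finrank_pos (zero_lt_one.trans hV)
  obtain ⟨v, hv⟩ := exists_ne (0 : V)
  obtain ⟨w, hvw⟩ := exists_linearIndependent_pair_of_one_lt_finrank hV hv
  obtain ⟨t, ht⟩ := exists_quadratic_eq_zero_of_isAlgClosed (mt (hQ v) hv) (polar Q v w) (Q w)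
  have hQtvw : Q (t • v + w) = 0 := by
    rw [QuadraticMap.map_add Q, QuadraticMap.map_smul, polar_smul_left, smul_eq_mul, smul_eq_mul]
    linear_combination ht
  have htvw : t • v + (1 : K) • w = 0 := by rw [one_smul, hQ _ hQtvw]
  exact one_ne_zero (LinearIndependent.pair_iff.mp hvw t 1 htvw).2

end Field

theorem sixInvariants_surjective_general {K : Type*} [Field K] [IsAlgClosed K]
    (q₁ q₂ q₃ q₄ q₅ q₆ : K) :
    ∃ Y₁ Y₂ Y₃ : Matrix (Fin 2) (Fin 2) K,
      Y₁.det = q₁ ∧ Y₂.det = q₂ ∧ Y₃.det = q₃ ∧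
      (Y₁ + Y₂).det - Y₁.det - Y₂.det = q₄ ∧
      (Y₁ + Y₃).det - Y₁.det - Y₃.det = q₅ ∧
      (Y₂ + Y₃).det - Y₂.det - Y₃.det = q₆ := by
  -- Upper triangular rather than symmetric, so that the polar form needs no division by `2`.
  let B := toBilin' !![q₁, q₄, q₅; 0, q₂, q₆; 0, 0, q₃]
  obtain ⟨f⟩ : Nonempty (B.toQuadraticMap →qᵢ detForm K) :=
    nonempty_isometry_detForm (by simp) (not_anisotropic_of_one_lt_finrank (by simp))
  have hdet (v : Fin 3 → K) : (f v).det = B v v := by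
    rw [← detForm_apply, f.map_app, LinearMap.BilinMap.toQuadraticMap_apply]
  have hpolar (v w : Fin 3 → K) :
      (f v + f w).det - (f v).det - (f w).det = B v w + B w v := by
    rw [← LinearMap.BilinMap.polar_toQuadraticMap, polar]
    simp only [LinearMap.BilinMap.toQuadraticMap_apply, hdet, ← map_add f]
  refine ⟨f (Pi.single 0 1), f (Pi.single 1 1), f (Pi.single 2 1), ?_⟩
  simp only [hpolar]
  simp [hdet, B]

/-- The map `(M₂(ℂ))³ → ℂ⁶` given by the six semi-invariants
`D₁, D₂, D₃, P₁₂, P₁₃, P₂₃` is surjective: every prescribed 6-tuple of values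
is attained by some triple of 2×2 complex matrices. -/
theorem sixInvariants_surjective (q₁ q₂ q₃ q₄ q₅ q₆ : ℂ) :
    ∃ Y₁ Y₂ Y₃ : M2,
      Y₁.det = q₁ ∧ Y₂.det = q₂ ∧ Y₃.det = q₃ ∧
      (Y₁ + Y₂).det - Y₁.det - Y₂.det = q₄ ∧
      (Y₁ + Y₃).det - Y₁.det - Y₃.det = q₅ ∧
      (Y₂ + Y₃).det - Y₂.det - Y₃.det = q₆ :=
  sixInvariants_surjective_general q₁ q₂ q₃ q₄ q₅ q₆
end
end
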